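/- arXiv:math/9903175 — 2 statements merged into one kernel-verified Lean document; each statement's English description precedes it below -/
import Mathlib

section
/- Let V be a finite-dimensional complex vector space and G ⊆ GL(V) a finite subgroup, acting in the induced way on the algebra of polynomial functions on V. If the subalgebra of G-invariant polynomial functions is isomorphic, as a graded ℂ-algebra, to a polynomial algebra (equivalently, the quotient V/G is smooth), then G is generated by complex reflections. -/
section

open CategoryTheory Abelian MvPolynomial

section ExtVanishing

variable {R : Type} [CommRing R]

/-- The short complex `B → B → B ⧸ (b)` of `R`-modules given by multiplication by `b`. -/
noncomputable abbrev mulShortComplex (R : Type) [CommRing R] {B : Type} [CommRing B] [Algebra R B]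
    (b : B) : ShortComplex (ModuleCat.{0} R) :=
  ModuleCat.shortComplexOfCompEqZero (LinearMap.mulLeft R b)
    (Ideal.Quotient.mkₐ R (Ideal.span {b})).toLinearMap (by
      ext x
      simp)

lemma shortExact_mulShortComplex {B : Type} [CommRing B] [Algebra R B] {b : B}
    (hb : b ∈ nonZeroDivisors B) : (mulShortComplex R b).ShortExact where
  exact := ModuleCat.shortComplex_exact _ fun x ↦ by
    change Ideal.Quotient.mk (Ideal.span {b}) x = 0 ↔ ∃ y, b * y = x
    rw [Ideal.Quotient.eq_zero_iff_mem, Ideal.mem_span_singleton]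
    exact ⟨fun ⟨y, hy⟩ ↦ ⟨y, hy.symm⟩, fun ⟨y, hy⟩ ↦ ⟨y, hy.symm⟩⟩
  mono_f := by
    rw [ModuleCat.mono_iff_injective]
    exact fun x y h ↦ (mul_cancel_left_mem_nonZeroDivisors hb).mp h
  epi_g := by
    rw [ModuleCat.epi_iff_surjective]
    exact Ideal.Quotient.mk_surjective

lemma smul_ext_eq_zero {X L : ModuleCat.{0} R} {r : R} (hr : ∀ l : L, r • l = 0) {i : ℕ}
    (e : Ext X L i) : r • e = 0 := by
  have : r • 𝟙 L = 0 := by ext l; exact hr l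
  rw [← Ext.comp_mk₀_id e, ← Ext.comp_smul, ← Ext.mk₀_smul, this, Ext.mk₀_zero, Ext.comp_zero]

/-- An element of the extension of an ideal killing `L` kills `Ext(B, L)`. -/
lemma mulLeft_comp_ext_eq_zero {B : Type} [CommRing B] [Algebra R B] {I : Ideal R}
    {L : ModuleCat.{0} R} (hL : ∀ r ∈ I, ∀ l : L, r • l = 0) {i : ℕ} {b : B}
    (hb : b ∈ I.map (algebraMap R B)) (e : Ext (ModuleCat.of R B) L i) :
    (Ext.mk₀ (ModuleCat.ofHom (LinearMap.mulLeft R b))).comp e (zero_add i) = 0 := by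
  induction hb using Submodule.span_induction generalizing e with
  | mem x hx =>
    obtain ⟨r, hr, rfl⟩ := hx
    have : ModuleCat.ofHom (LinearMap.mulLeft R (algebraMap R B r)) =
        r • 𝟙 (ModuleCat.of R B) := by
      ext x; simp [Algebra.smul_def]
    rw [this, Ext.mk₀_smul, Ext.smul_comp, Ext.mk₀_id_comp, smul_ext_eq_zero (hL r hr)]
  | zero =>
    have : ModuleCat.ofHom (LinearMap.mulLeft R (0 : B)) = 0 := by ext; simp
    rw [this, Ext.mk₀_zero, Ext.zero_comp]
  | add x y _ _ hx hy =>
    have : ModuleCat.ofHom (LinearMap.mulLeft R (x + y)) =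
        ModuleCat.ofHom (LinearMap.mulLeft R x) + ModuleCat.ofHom (LinearMap.mulLeft R y) := by
      ext; simp [add_mul]
    rw [this, Ext.mk₀_add, Ext.add_comp, hx, hy, add_zero]
  | smul a x _ hx =>
    have : ModuleCat.ofHom (LinearMap.mulLeft R (a • x)) =
        ModuleCat.ofHom (LinearMap.mulLeft R a) ≫ ModuleCat.ofHom (LinearMap.mulLeft R x) := by
      ext; simp
      ring
    rw [this, ← Ext.mk₀_comp_mk₀, Ext.comp_assoc_of_second_deg_zero, hx, Ext.comp_zero]

/-- Dividing by a nonzerodivisor which is nilpotent modulo `I B` shifts `Ext` up. -/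
lemma subsingleton_ext_of_quotient {B : Type} [CommRing B] [Algebra R B] {I : Ideal R}
    {L : ModuleCat.{0} R} (hL : ∀ r ∈ I, ∀ l : L, r • l = 0) {b : B}
    (hb : b ∈ nonZeroDivisors B) (hbI : b ∈ (I.map (algebraMap R B)).radical) {i : ℕ}
    (h : Subsingleton (Ext (ModuleCat.of R (B ⧸ Ideal.span {b})) L (i + 1))) :
    Subsingleton (Ext (ModuleCat.of R B) L i) := by
  obtain ⟨N, hN⟩ := hbI
  have key : ∀ k : ℕ, ∀ e : Ext (ModuleCat.of R B) L i, ∃ e',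
      (Ext.mk₀ (ModuleCat.ofHom (LinearMap.mulLeft R (b ^ k)))).comp e' (zero_add i) = e := by
    intro k
    induction k with
    | zero =>
      intro e
      have : ModuleCat.ofHom (LinearMap.mulLeft R (b ^ 0)) = 𝟙 (ModuleCat.of R B) := by ext; simp
      exact ⟨e, by rw [this, Ext.mk₀_id_comp]⟩
    | succ k ih =>
      intro e
      obtain ⟨e₁, he₁⟩ := ih e
      obtain ⟨e₂, he₂⟩ := Ext.contravariant_sequence_exact₁ (shortExact_mulShortComplex (R := R) hb)
        L e₁ (add_comm 1 i) (@Subsingleton.elim _ h _ _)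
      refine ⟨e₂, ?_⟩
      have : ModuleCat.ofHom (LinearMap.mulLeft R (b ^ (k + 1))) =
          ModuleCat.ofHom (LinearMap.mulLeft R (b ^ k)) ≫
            ModuleCat.ofHom (LinearMap.mulLeft R b) := by
        ext; simp
        ring
      rw [this, ← Ext.mk₀_comp_mk₀, Ext.comp_assoc_of_second_deg_zero, ← he₁]
      congr 1
  refine subsingleton_of_forall_eq 0 fun e ↦ ?_
  obtain ⟨e', rfl⟩ := key N e
  exact mulLeft_comp_ext_eq_zero hL hN e'

end ExtVanishing

section PolynomialSlices

/-- Setting the first variable of a polynomial ring to zero. -/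
lemma exists_quotient_algEquiv {k : ℕ} {B : Type} [CommRing B] [Algebra ℂ B]
    (e : B ≃ₐ[ℂ] MvPolynomial (Fin (k + 1)) ℂ) {b : B} (hb : e b = X 0) :
    ∃ e' : (B ⧸ Ideal.span {b}) ≃ₐ[ℂ] MvPolynomial (Fin k) ℂ,
      (∀ i : Fin k, e' (Ideal.Quotient.mk _ (e.symm (X i.succ))) = X i) ∧
      ∀ c, constantCoeff (e' (Ideal.Quotient.mk _ c)) = constantCoeff (e c) := by
  let E := e.trans (finSuccEquiv ℂ k)
  have hE : E b = Polynomial.X := by simp [E, hb, finSuccEquiv_X_zero]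
  let π : B →ₐ[ℂ] MvPolynomial (Fin k) ℂ :=
    ((Polynomial.aeval (0 : MvPolynomial (Fin k) ℂ)).restrictScalars ℂ).comp E.toAlgHom
  have hπ (c : B) : π c = (E c).coeff 0 := by simp [π, Polynomial.coeff_zero_eq_aeval_zero]
  have hsurj : Function.Surjective π := fun p ↦ ⟨E.symm (Polynomial.C p), by simp [hπ]⟩
  have hker : Ideal.span {b} = RingHom.ker π := by
    ext c
    rw [Ideal.mem_span_singleton, RingHom.mem_ker, hπ, ← Polynomial.X_dvd_iff, ← hE]
    exact (map_dvd_iff E).symm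
  refine ⟨(Ideal.quotientEquivAlgOfEq ℂ hker).trans
    (Ideal.quotientKerAlgEquivOfSurjective hsurj), fun i ↦ ?_, fun c ↦ ?_⟩
  · change π _ = _
    simp [hπ, E, finSuccEquiv_X_succ]
  · change constantCoeff (π c) = _
    rw [hπ, constantCoeff_eq, constantCoeff_eq]
    simp only [E, AlgEquiv.trans_apply, finSuccEquiv_coeff_coeff]
    congr 1
    ext i
    cases i using Fin.cases <;> simp

/-- The residue module of a polynomial algebra over `R` at the origin has projective dimension
at most the number of variables more than the algebra itself. -/
lemma hasProjectiveDimensionLT_of_polynomial {R : Type} [CommRing R] [Algebra ℂ R]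
    (k : ℕ) (B : Type) [CommRing B] [Algebra ℂ B] [Algebra R B]
    (e : B ≃ₐ[ℂ] MvPolynomial (Fin k) ℂ) (d : ℕ)
    (hB : HasProjectiveDimensionLT (ModuleCat.of R B) d) (L : ModuleCat.{0} R)
    (q : B →ₗ[R] L) (hq : Function.Surjective q) (hker : ∀ b, q b = 0 ↔ constantCoeff (e b) = 0) :
    HasProjectiveDimensionLT L (d + k) := by
  induction k generalizing B d with
  | zero =>
    have hinj : Function.Injective q := by
      rw [injective_iff_map_eq_zero]
      intro b hb
      rw [hker] at hb
      rw [← map_eq_zero_iff e e.injective, eq_C_of_isEmpty (e b), ← constantCoeff_eq, hb, C_0]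
    exact hasProjectiveDimensionLT_of_iso (LinearEquiv.ofBijective q ⟨hinj, hq⟩).toModuleIso d
  | succ k ih =>
    obtain ⟨b, hb⟩ := e.surjective (X 0)
    obtain ⟨e', -, he'⟩ := exists_quotient_algEquiv e hb
    have hbk : constantCoeff (e b) = 0 := by simp [hb]
    have : IsDomain B := e.toMulEquiv.isDomain _
    have hb0 : b ∈ nonZeroDivisors B := by
      rw [mem_nonZeroDivisors_iff_ne_zero, Ne, ← map_eq_zero_iff e e.injective]
      simp [hb]
    have hle : (Ideal.span {b}).restrictScalars R ≤ LinearMap.ker q := by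
      intro x hx
      obtain ⟨y, rfl⟩ := Ideal.mem_span_singleton.mp hx
      rw [LinearMap.mem_ker, hker, map_mul, map_mul, hbk, zero_mul]
    have hd := (shortExact_mulShortComplex (R := R) hb0).hasProjectiveDimensionLT_X₃ d hB
      (hasProjectiveDimensionLT_of_ge _ d (d + 1) (Nat.le_succ d))
    have := ih (B ⧸ Ideal.span {b}) e' (d + 1) hd
      (((Ideal.span {b}).restrictScalars R).liftQ q hle)
      (fun l ↦ by obtain ⟨x, rfl⟩ := hq l; exact ⟨Ideal.Quotient.mk _ x, rfl⟩)
      (fun x ↦ by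
        obtain ⟨x, rfl⟩ := Ideal.Quotient.mk_surjective x
        exact (hker x).trans (Eq.congr_left (he' x).symm))
    rwa [add_assoc, add_comm 1] at this

/-- `Ext` out of a polynomial algebra over `R` into `L` vanishes in positive degree once it
vanishes for the residue module in degrees above the number of variables. -/
lemma subsingleton_ext_of_polynomial {R : Type} [CommRing R] [Algebra ℂ R] {I : Ideal R}
    {L : ModuleCat.{0} R} (hL : ∀ r ∈ I, ∀ l : L, r • l = 0)
    (k : ℕ) (B : Type) [CommRing B] [Algebra ℂ B] [Algebra R B] [IsScalarTower ℂ R B]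
    (e : B ≃ₐ[ℂ] MvPolynomial (Fin k) ℂ)
    (hrad : ∀ j, e.symm (X j) ∈ (I.map (algebraMap R B)).radical) (i : ℕ)
    (q : R →ₗ[R] L) (hq : Function.Surjective q)
    (hker : ∀ r, q r = 0 ↔ constantCoeff (e (algebraMap R B r)) = 0)
    (hExt : Subsingleton (Ext L L (i + k))) :
    Subsingleton (Ext (ModuleCat.of R B) L i) := by
  induction k generalizing B i with
  | zero =>
    have hinj (b : B) : b = 0 ↔ constantCoeff (e b) = 0 := by
      refine ⟨fun h ↦ by simp [h], fun hb ↦ ?_⟩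
      rw [← map_eq_zero_iff e e.injective, eq_C_of_isEmpty (e b), ← constantCoeff_eq, hb, C_0]
    have hk : LinearMap.ker q = LinearMap.ker (Algebra.linearMap R B) := by
      ext r
      rw [LinearMap.mem_ker, LinearMap.mem_ker, hker, Algebra.linearMap_apply, hinj]
    have hs : Function.Surjective (Algebra.linearMap R B) := by
      intro b
      refine ⟨algebraMap ℂ R (constantCoeff (e b)), ?_⟩
      rw [Algebra.linearMap_apply, ← IsScalarTower.algebraMap_apply ℂ R B, ← sub_eq_zero, hinj]
      simp [algebraMap_eq]
    let E : L ≃ₗ[R] B := (q.quotKerEquivOfSurjective hq).symm ≪≫ₗ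
      Submodule.quotEquivOfEq _ _ hk ≪≫ₗ (Algebra.linearMap R B).quotKerEquivOfSurjective hs
    refine subsingleton_of_forall_eq 0 fun x ↦ ?_
    have hx : (Ext.mk₀ (ModuleCat.ofHom E.toLinearMap)).comp x (zero_add i) = 0 :=
      @Subsingleton.elim _ hExt _ _
    have hid : ModuleCat.ofHom E.symm.toLinearMap ≫ ModuleCat.ofHom E.toLinearMap =
        𝟙 (ModuleCat.of R B) := by ext; simp
    rw [← Ext.mk₀_id_comp x, ← hid, ← Ext.mk₀_comp_mk₀, Ext.comp_assoc_of_second_deg_zero]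
    erw [hx]
    rw [Ext.comp_zero]
  | succ k ih =>
    obtain ⟨b, hb⟩ := e.surjective (X 0)
    obtain ⟨e', hX, he'⟩ := exists_quotient_algEquiv e hb
    have : IsDomain B := e.toMulEquiv.isDomain _
    have hb0 : b ∈ nonZeroDivisors B := by
      rw [mem_nonZeroDivisors_iff_ne_zero, Ne, ← map_eq_zero_iff e e.injective]
      simp [hb]
    refine subsingleton_ext_of_quotient hL hb0 (by simpa [← hb] using hrad 0)
      (ih (B ⧸ Ideal.span {b}) e' (fun j ↦ ?_) (i + 1) (fun r ↦ ?_) ?_)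
    · rw [← hX j, AlgEquiv.symm_apply_apply]
      obtain ⟨N, hN⟩ := hrad j.succ
      refine ⟨N, ?_⟩
      have := Ideal.mem_map_of_mem (Ideal.Quotient.mk (Ideal.span {b})) hN
      rwa [Ideal.map_map, map_pow] at this
    · rw [hker]
      exact Eq.congr_left (he' _).symm
    · rwa [add_assoc, add_comm 1]

end PolynomialSlices

section LocalFreeness

variable {R : Type} [CommRing R]

lemma smul_quotient_eq_zero {I : Ideal R} {r : R} (hr : r ∈ I) (l : R ⧸ I) : r • l = 0 := by
  rw [Algebra.smul_def, Ideal.Quotient.algebraMap_eq, Ideal.Quotient.eq_zero_iff_mem.mpr hr,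
    zero_mul]

/-- `Ext(Q, R ⧸ I)` vanishes if `Q` is killed by some element of `1 + I`. -/
lemma subsingleton_ext_quotient_of_smul_eq_zero {I : Ideal R} {Q : ModuleCat.{0} R} {r : R}
    (hr : r - 1 ∈ I) (hQ : ∀ x : Q, r • x = 0) (i : ℕ) :
    Subsingleton (Ext Q (ModuleCat.of R (R ⧸ I)) i) := by
  refine subsingleton_of_forall_eq 0 fun e ↦ ?_
  have h₁ : (r - 1) • e = 0 := smul_ext_eq_zero (fun l ↦ smul_quotient_eq_zero hr l) e
  have h₂ : r • e = 0 := by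
    have : r • 𝟙 Q = 0 := by ext l; exact hQ l
    rw [← Ext.mk₀_id_comp e, ← Ext.smul_comp, ← Ext.mk₀_smul, this, Ext.mk₀_zero, Ext.zero_comp]
  rwa [sub_smul, h₂, one_smul, zero_sub, neg_eq_zero] at h₁

/-- A finite module all of whose maps to the residue field vanish is killed by an element of
`1 + I`. -/
lemma exists_smul_eq_zero_of_hom_eq_zero {I : Ideal R} [I.IsMaximal] {M : Type} [AddCommGroup M]
    [Module R M] [Module.Finite R M] (h : ∀ f : M →ₗ[R] R ⧸ I, f = 0) :
    ∃ r : R, r - 1 ∈ I ∧ ∀ x : M, r • x = 0 := by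
  let := Ideal.Quotient.field I
  have htop : (⊤ : Submodule R M) ≤ I • ⊤ := by
    intro x _
    by_contra hx
    have hx' : (Submodule.Quotient.mk x : M ⧸ (I • ⊤ : Submodule R M)) ≠ 0 := by
      rwa [Ne, Submodule.Quotient.mk_eq_zero]
    exact hx' ((Module.forall_dual_apply_eq_zero_iff (R ⧸ I) _).mp fun f ↦
      LinearMap.congr_fun (h ((f.restrictScalars R).comp (Submodule.mkQ _))) x)
  obtain ⟨r, hr, hr'⟩ := Submodule.exists_sub_one_mem_and_smul_eq_zero_of_fg_of_le_smul I ⊤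
    Module.Finite.fg_top htop
  exact ⟨r, hr, fun x ↦ hr' x trivial⟩

/-- A finite module over a Noetherian domain with vanishing `Ext¹` into the residue field at `I`
is free near `I`. -/
lemma exists_linearIndependent_of_subsingleton_ext [IsDomain R] [IsNoetherianRing R] (I : Ideal R)
    [I.IsMaximal] (M : Type) [AddCommGroup M] [Module R M] [Module.Finite R M]
    (h : Subsingleton (Ext (ModuleCat.of R M) (ModuleCat.of R (R ⧸ I)) 1)) :
    ∃ (k : ℕ) (b : Fin k → M), LinearIndependent R b ∧
      ∃ r ∉ I, ∀ x, r • x ∈ Submodule.span R (Set.range b) := by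
  let := Ideal.Quotient.field I
  let β := Module.finBasis (R ⧸ I) (M ⧸ (I • ⊤ : Submodule R M))
  choose b hb using fun i ↦ Submodule.Quotient.mk_surjective (I • ⊤ : Submodule R M) (β i)
  have notMem {r : R} (hr : r - 1 ∈ I) : r ∉ I := fun hrI ↦
    (Ideal.ne_top_iff_one I).mp Ideal.IsPrime.ne_top' (by simpa using sub_mem hrI hr)
  set N := Submodule.span R (Set.range b) with hN
  obtain ⟨r, hr, hrM⟩ : ∃ r : R, r - 1 ∈ I ∧ ∀ x : M ⧸ N, r • x = 0 := by
    refine exists_smul_eq_zero_of_hom_eq_zero fun f ↦ ?_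
    ext x
    let F := f.comp N.mkQ
    have hF : I • (⊤ : Submodule R M) ≤ LinearMap.ker F := by
      refine Submodule.smul_le.mpr fun r hr x _ ↦ ?_
      rw [LinearMap.mem_ker, map_smul, smul_quotient_eq_zero hr]
    let F' : (M ⧸ (I • ⊤ : Submodule R M)) →ₗ[R ⧸ I] R ⧸ I :=
      { toFun := (I • ⊤ : Submodule R M).liftQ F hF
        map_add' := map_add _
        map_smul' := fun c y ↦ by
          obtain ⟨c, rfl⟩ := Ideal.Quotient.mk_surjective c
          exact map_smul ((I • ⊤ : Submodule R M).liftQ F hF) c y }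
    have hF' : F' = 0 := by
      refine β.ext fun i ↦ ?_
      rw [← hb i]
      change f (N.mkQ (b i)) = 0
      rw [Submodule.mkQ_apply, (Submodule.Quotient.mk_eq_zero N).mpr
        (Submodule.subset_span (Set.mem_range_self i)), map_zero]
    exact LinearMap.congr_fun hF' (Submodule.Quotient.mk x)
  have hsub : Subsingleton (Ext (ModuleCat.of R N) (ModuleCat.of R (R ⧸ I)) 1) := by
    let S : ShortComplex (ModuleCat.{0} R) := ModuleCat.shortComplexOfCompEqZero N.subtype N.mkQ
      (by ext; simp)
    have hS : S.ShortExact :=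
      { exact := ModuleCat.shortComplex_exact _ (LinearMap.exact_subtype_mkQ N)
        mono_f := (ModuleCat.mono_iff_injective _).mpr N.subtype_injective
        epi_g := (ModuleCat.epi_iff_surjective _).mpr N.mkQ_surjective }
    have h₂ : Subsingleton (Ext S.X₃ (ModuleCat.of R (R ⧸ I)) 2) :=
      subsingleton_ext_quotient_of_smul_eq_zero hr hrM 2
    refine subsingleton_of_forall_eq 0 fun e ↦ ?_
    obtain ⟨e', rfl⟩ := Ext.contravariant_sequence_exact₁ hS _ e (n₁ := 2) rfl
      (Subsingleton.elim _ _)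
    rw [@Subsingleton.elim _ h e' 0, Ext.comp_zero]
  refine ⟨_, b, ?_, r, notMem hr, fun x ↦ ?_⟩
  · let φ : (Fin (Module.finrank (R ⧸ I) (M ⧸ (I • ⊤ : Submodule R M))) → R) →ₗ[R] N :=
      (Fintype.linearCombination R b).codRestrict N fun c ↦ by
        rw [hN, ← Fintype.range_linearCombination]
        exact ⟨c, rfl⟩
    have hφ : Function.Surjective φ := by
      rintro ⟨x, hx⟩
      rw [hN, ← Fintype.range_linearCombination] at hx
      obtain ⟨c, hc⟩ := hx
      exact ⟨c, Subtype.ext hc⟩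
    have hker : ∀ c, φ c = 0 → ∀ i, c i ∈ I := by
      intro c hc i
      have h0 : ∑ i, c i • b i = 0 := congrArg Subtype.val hc
      have h1 : ∑ i, (Ideal.Quotient.mk I (c i)) • β i = 0 := by
        have := congrArg (I • ⊤ : Submodule R M).mkQ h0
        simp only [map_sum, map_smul, Submodule.mkQ_apply, hb, map_zero] at this
        exact this
      exact Ideal.Quotient.eq_zero_iff_mem.mp
        (Fintype.linearIndependent_iff.mp β.linearIndependent _ h1 i)
    obtain ⟨s, hs, hsK⟩ : ∃ s : R, s - 1 ∈ I ∧ ∀ x : LinearMap.ker φ, s • x = 0 := by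
      refine exists_smul_eq_zero_of_hom_eq_zero (I := I) (M := LinearMap.ker φ) fun f ↦ ?_
      have hS := LinearMap.shortExact_shortComplexKer hφ
      obtain ⟨e, he⟩ := Ext.contravariant_sequence_exact₁ hS _
        (Ext.mk₀ (ModuleCat.ofHom f : ModuleCat.of R _ ⟶ ModuleCat.of R (R ⧸ I)))
        (n₁ := 1) rfl (@Subsingleton.elim _ hsub _ _)
      obtain ⟨g, rfl⟩ := (Ext.mk₀_bijective _ _).2 e
      rw [Ext.mk₀_comp_mk₀, (Ext.mk₀_bijective _ _).1.eq_iff] at he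
      ext x
      have hfx : f x = g.hom x.1 := (ConcreteCategory.congr_hom he x).symm
      have hx : x.1 = ∑ i, x.1 i • Pi.single i (1 : R) := by
        ext j; simp [Finset.sum_apply, Pi.single_apply]
      rw [hfx, hx, map_sum]
      refine Finset.sum_eq_zero fun i _ ↦ ?_
      erw [map_smul]
      exact smul_quotient_eq_zero (hker x.1 x.2 i) _
    have hs0 : s ≠ 0 := fun h ↦ notMem hs (h ▸ I.zero_mem)
    refine Fintype.linearIndependent_iff.mpr fun c hc i ↦ ?_
    have := hsK ⟨c, Subtype.ext hc⟩
    have := congrFun (congrArg Subtype.val this) i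
    exact (mul_eq_zero.mp this).resolve_left hs0
  · have := hrM (N.mkQ x)
    rwa [← map_smul, Submodule.mkQ_apply, Submodule.Quotient.mk_eq_zero] at this

end LocalFreeness

section Invariants

variable {G S R : Type*} [Group G] [CommRing S] [MulSemiringAction G S]
  [CommRing R] [Algebra R S]

/-- The submonoid of elements fixed by a subgroup. -/
def fixedSubmonoid (S : Type*) [CommRing S] [MulSemiringAction G S] (H : Subgroup G) :
    Submonoid S where
  carrier := {s | ∀ h ∈ H, h • s = s}
  mul_mem' hs ht h hh := by rw [smul_mul', hs h hh, ht h hh]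
  one_mem' h _ := smul_one h

lemma out_smul_eq {H : Subgroup G} {s : S} (hs : s ∈ fixedSubmonoid S H) (g : G) :
    (QuotientGroup.mk g : G ⧸ H).out • s = g • s := by
  obtain ⟨h, hh⟩ := QuotientGroup.mk_out_eq_mul H g
  rw [hh, mul_smul, hs h h.2]

/-- The conjugates of an `R`-linearly independent family of `H`-invariants are linearly
independent vectors. -/
lemma linearIndependent_out_smul [IsDomain S] [Finite G] [CharZero S] [Algebra.IsInvariant R S G]
    [FaithfulSMul R S] {H : Subgroup G} {k : ℕ} {b : Fin k → S}
    (hbH : ∀ i, b i ∈ fixedSubmonoid S H) (hb : LinearIndependent R b) :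
    LinearIndependent S fun i (q : G ⧸ H) ↦ q.out • b i := by
  have := Fintype.ofFinite G
  refine Fintype.linearIndependent_iff.mpr fun c hc i₀ ↦ ?_
  by_contra hci
  have hrel (g : G) : ∑ i, c i * g • b i = 0 := by
    have := congrFun hc (QuotientGroup.mk g)
    simpa [Finset.sum_apply, out_smul_eq (hbH _)] using this
  classical
  let s : S := ∏ g ∈ Finset.univ.erase (1 : G), g • c i₀
  have hs : s * c i₀ = ∏ g : G, g • c i₀ := by
    rw [← Finset.prod_erase_mul _ _ (Finset.mem_univ (1 : G)), one_smul]
  have htr (i : Fin k) : ∃ t : R, algebraMap R S t = ∑ g : G, g • (s * c i) := by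
    refine Algebra.IsInvariant.isInvariant (G := G) _ fun g ↦ ?_
    rw [Finset.smul_sum]
    simp_rw [← mul_smul]
    exact Fintype.sum_bijective _ (Group.mulLeft_bijective g) _ _ fun _ ↦ rfl
  choose t ht using htr
  have hsum : ∑ i, t i • b i = 0 := by
    simp_rw [Algebra.smul_def, ht, Finset.sum_mul]
    rw [Finset.sum_comm]
    refine Finset.sum_eq_zero fun g _ ↦ ?_
    have := congrArg (fun x ↦ g • (s * x)) (hrel g⁻¹)
    simpa [Finset.mul_sum, Finset.smul_sum, smul_mul', mul_assoc] using this
  have h0 : ∑ g : G, g • (s * c i₀) = 0 := by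
    rw [← ht, Fintype.linearIndependent_iff.mp hb t hsum i₀, map_zero]
  have hinv (g : G) : g • (s * c i₀) = s * c i₀ := by
    rw [hs, Finset.smul_prod']
    simp_rw [← mul_smul]
    exact Fintype.prod_bijective _ (Group.mulLeft_bijective g) _ _ fun _ ↦ rfl
  simp_rw [hinv, Finset.sum_const, Finset.card_univ, nsmul_eq_mul] at h0
  have h1 := (mul_eq_zero.mp h0).resolve_left (by simp [Fintype.card_ne_zero])
  rw [hs, Finset.prod_eq_zero_iff] at h1
  obtain ⟨g, -, hg⟩ := h1
  exact hci ((smul_eq_zero_iff_eq g).mp hg)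

/-- Dedekind independence: modulo a prime which is unramified over the `H`-invariants, the
conjugation matrix of a family generating the `H`-invariants near that prime has independent
columns. -/
lemma eq_zero_of_sum_mul_out_smul [SMulCommClass G R S] {H : Subgroup G} {k : ℕ}
    {b : Fin k → S} {r : R}
    (hr : ∀ s ∈ fixedSubmonoid S H, r • s ∈ Submodule.span R (Set.range b))
    {P : Ideal S} [P.IsPrime] (hrP : algebraMap R S r ∉ P)
    (hP : ∀ g₁ g₂ : G, (∀ s ∈ fixedSubmonoid S H, g₁ • s - g₂ • s ∈ P) → g₁⁻¹ * g₂ ∈ H)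
    [Fintype (G ⧸ H)]
    (c : G ⧸ H → S ⧸ P) (hc : ∀ i, ∑ q, c q * Ideal.Quotient.mk P (q.out • b i) = 0) : c = 0 := by
  let χ (q : G ⧸ H) : fixedSubmonoid S H →* S ⧸ P :=
    ((Ideal.Quotient.mk P).comp (MulSemiringAction.toRingHom G S q.out)).toMonoidHom.comp
      (fixedSubmonoid S H).subtype
  have hχ (q : G ⧸ H) (s : fixedSubmonoid S H) :
    χ q s = Ideal.Quotient.mk P (q.out • (s : S)) := rfl
  have hinj : Function.Injective χ := by
    intro q₁ q₂ h
    rw [← Quotient.out_eq q₁, ← Quotient.out_eq q₂]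
    refine QuotientGroup.eq.mpr (hP _ _ fun s hs ↦ ?_)
    rw [← Ideal.Quotient.eq]
    exact DFunLike.congr_fun h ⟨s, hs⟩
  have hli := (linearIndependent_monoidHom (fixedSubmonoid S H) (S ⧸ P)).comp χ hinj
  have hspan (x : S) (hx : x ∈ Submodule.span R (Set.range b)) :
      ∑ q, c q * Ideal.Quotient.mk P (q.out • x) = 0 := by
    induction hx using Submodule.span_induction with
    | mem x hx => obtain ⟨i, rfl⟩ := hx; exact hc i
    | zero => simp
    | add x y _ _ hx hy => simp only [smul_add, map_add, mul_add, Finset.sum_add_distrib, hx, hy,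
        add_zero]
    | smul a x _ hx =>
      have : ∀ q : G ⧸ H, c q * Ideal.Quotient.mk P (q.out • a • x) =
          Ideal.Quotient.mk P (algebraMap R S a) * (c q * Ideal.Quotient.mk P (q.out • x)) := by
        intro q
        rw [smul_comm, Algebra.smul_def, map_mul]
        ring
      simp_rw [this, ← Finset.mul_sum, hx, mul_zero]
  funext q
  refine Fintype.linearIndependent_iff.mp hli c ?_ q
  funext s
  have := hspan _ (hr s s.2)
  have h2 : ∀ q : G ⧸ H, c q * Ideal.Quotient.mk P (q.out • r • (s : S)) =
      Ideal.Quotient.mk P (algebraMap R S r) * (c q * Ideal.Quotient.mk P (q.out • (s : S))) := by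
    intro q
    rw [smul_comm, Algebra.smul_def, map_mul]
    ring
  simp_rw [h2, ← Finset.mul_sum] at this
  have := (mul_eq_zero.mp this).resolve_left (by rwa [Ideal.Quotient.eq_zero_iff_mem])
  simpa [Finset.sum_apply, hχ] using this

/-- If the `H`-invariants are free over the `G`-invariants near a prime `Q` on whose residue ring
`G` acts trivially, and no element outside `H` is ramified in codimension one, then `H = G`. -/
lemma eq_top_of_free_of_unramified [IsDomain S] [Finite G] [CharZero S]
    [UniqueFactorizationMonoid S] [Algebra.IsInvariant R S G] [SMulCommClass G R S] [FaithfulSMul R S]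
    {H : Subgroup G}
    {k : ℕ} {b : Fin k → S} (hbH : ∀ i, b i ∈ fixedSubmonoid S H) (hb : LinearIndependent R b)
    {r : R} (hr : ∀ s ∈ fixedSubmonoid S H, r • s ∈ Submodule.span R (Set.range b))
    (Q : Ideal S) [Q.IsPrime] (hrQ : algebraMap R S r ∉ Q) (hQ : ∀ (g : G) (s : S), g • s - s ∈ Q)
    (hP : ∀ P : Ideal S, P.IsPrime → Submodule.IsPrincipal P →
      ∀ g₁ g₂ : G, (∀ s ∈ fixedSubmonoid S H, g₁ • s - g₂ • s ∈ P) → g₁⁻¹ * g₂ ∈ H) :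
    H = ⊤ := by
  classical
  have := Fintype.ofFinite (G ⧸ H)
  have hrows := linearIndependent_out_smul hbH hb
  have hr0 : algebraMap R S r ≠ 0 := fun h ↦ hrQ (h ▸ Q.zero_mem)
  have hcols : LinearIndependent S fun (q : G ⧸ H) (i : Fin k) ↦ q.out • b i := by
    refine Fintype.linearIndependent_iff.mpr fun c hc q ↦ ?_
    have := eq_zero_of_sum_mul_out_smul (P := (⊥ : Ideal S)) hr (by simpa using hr0)
      (hP ⊥ Ideal.isPrime_bot inferInstance) (fun q ↦ Ideal.Quotient.mk ⊥ (c q)) fun i ↦ by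
        simp_rw [← map_mul, ← map_sum]
        rw [Ideal.Quotient.eq_zero_iff_mem, Ideal.mem_bot]
        simpa [Finset.sum_apply] using congrFun hc i
    simpa [Ideal.Quotient.eq_zero_iff_mem] using congrFun this q
  have hcard : Fintype.card (Fin k) = Fintype.card (G ⧸ H) := by
    refine le_antisymm ?_ ?_
    · simpa using hrows.fintype_card_le_finrank
    · simpa using hcols.fintype_card_le_finrank
  let σ := Fintype.equivOfCardEq hcard
  let M : Matrix (G ⧸ H) (G ⧸ H) S := Matrix.of fun p q ↦ q.out • b (σ.symm p)
  have hker {P : Ideal S} [P.IsPrime] (hpr : Submodule.IsPrincipal P)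
      (hrP : algebraMap R S r ∉ P) : M.det ∉ P := by
    intro hdet
    rw [← Ideal.Quotient.eq_zero_iff_mem, RingHom.map_det, ← Matrix.exists_mulVec_eq_zero_iff]
      at hdet
    obtain ⟨c, hc0, hc⟩ := hdet
    refine hc0 (eq_zero_of_sum_mul_out_smul hr hrP (hP P ‹_› hpr) c fun i ↦ ?_)
    have := congrFun hc (σ i)
    simpa [Matrix.mulVec, dotProduct, M, mul_comm] using this
  have hdet0 : M.det ≠ 0 := by
    simpa using hker (P := ⊥) inferInstance (by simpa using hr0)
  have hdetQ : M.det ∉ Q := by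
    intro hmem
    obtain ⟨f, hf, hassoc⟩ := WfDvdMonoid.exists_factors M.det hdet0
    have hprod : f.prod ∈ Q := (Q.mem_iff_of_associated hassoc).mpr hmem
    obtain ⟨p, hpf, hpQ⟩ := (Ideal.IsPrime.multiset_prod_mem_iff_exists_mem ‹_› f).mp hprod
    have hp : Prime p := (hf p hpf).prime
    have : (Ideal.span {p}).IsPrime := (Ideal.span_singleton_prime hp.ne_zero).mpr hp
    refine hker (P := Ideal.span {p}) ⟨p, rfl⟩ (fun h ↦ hrQ ?_) ?_
    · exact (Ideal.span_singleton_le_iff_mem Q).mpr hpQ h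
    · exact Ideal.mem_span_singleton.mpr ((Multiset.dvd_prod hpf).trans hassoc.dvd)
  have hsub : ∀ q₁ q₂ : G ⧸ H, q₁ = q₂ := by
    intro q₁ q₂
    by_contra hne
    refine hdetQ ?_
    rw [← Ideal.Quotient.eq_zero_iff_mem, RingHom.map_det]
    refine Matrix.det_zero_of_column_eq hne fun p ↦ ?_
    have (q : G ⧸ H) : Ideal.Quotient.mk Q (q.out • b (σ.symm p)) =
        Ideal.Quotient.mk Q (b (σ.symm p)) := Ideal.Quotient.eq.mpr (hQ _ _)
    simp [M, this]
  refine (Subgroup.eq_top_iff' H).mpr fun g ↦ ?_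
  simpa using QuotientGroup.eq.mp (hsub (QuotientGroup.mk 1) (QuotientGroup.mk g))

/-- If two conjugations agree on `H`-invariants modulo a prime, then they agree on any given
element up to `H`. -/
lemma exists_smul_sub_smul_mem [Finite G] {H : Subgroup G} {P : Ideal S} [P.IsPrime]
    {g₁ g₂ : G} (h : ∀ s ∈ fixedSubmonoid S H, g₁ • s - g₂ • s ∈ P) (t : S) :
    ∃ u ∈ H, g₁ • t - (g₂ * u) • t ∈ P := by
  have := Fintype.ofFinite H
  let χ := MulSemiringAction.charpoly H t
  have hcoeff (j : ℕ) : χ.coeff j ∈ fixedSubmonoid S H := fun u hu ↦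
    MulSemiringAction.smul_coeff_charpoly t j (⟨u, hu⟩ : H)
  let π := Ideal.Quotient.mk P
  have hmap : χ.map (π.comp (MulSemiringAction.toRingHom G S g₁)) =
      χ.map (π.comp (MulSemiringAction.toRingHom G S g₂)) := by
    ext j
    simp only [Polynomial.coeff_map]
    exact Ideal.Quotient.eq.mpr (h _ (hcoeff j))
  have hroot : (χ.map (π.comp (MulSemiringAction.toRingHom G S g₁))).eval (π (g₁ • t)) = 0 := by
    have := Polynomial.eval₂_at_apply (p := χ) (π.comp (MulSemiringAction.toRingHom G S g₁)) t
    rw [Polynomial.eval_map]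
    rw [MulSemiringAction.eval_charpoly, map_zero] at this
    exact this
  rw [hmap, Polynomial.eval_map] at hroot
  simp only [χ, MulSemiringAction.charpoly_eq, Polynomial.eval₂_finsetProd,
    Finset.prod_eq_zero_iff] at hroot
  obtain ⟨u, -, hu⟩ := hroot
  refine ⟨u, u.2, Ideal.Quotient.eq.mp (sub_eq_zero.mp ?_)⟩
  rw [mul_smul]
  simpa [π, Subgroup.smul_def] using hu

end Invariants

section Retract

variable {G S R : Type} [Group G] [CommRing S] [MulSemiringAction G S] [CommRing R] [Algebra R S]

/-- The `R`-submodule of elements fixed by a subgroup. -/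
def fixedSubmodule (R S : Type) [CommRing S] [MulSemiringAction G S] [CommRing R] [Algebra R S]
    [SMulCommClass G R S] (H : Subgroup G) : Submodule R S where
  carrier := {s | ∀ h ∈ H, h • s = s}
  add_mem' hs ht h hh := by rw [smul_add, hs h hh, ht h hh]
  zero_mem' h _ := smul_zero h
  smul_mem' r s hs h hh := by rw [smul_comm, hs h hh]

/-- The Reynolds operator is a retraction onto the invariants. -/
lemma exists_retraction_fixedSubmodule [SMulCommClass G R S] [Finite G] (H : Subgroup G)
    (hcard : IsUnit (Nat.card H : S)) :
    ∃ π : S →ₗ[R] fixedSubmodule R S H, ∀ x : fixedSubmodule R S H, π x = x := by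
  have := Fintype.ofFinite H
  obtain ⟨c, hc⟩ := hcard.exists_right_inv
  have hcG (g : G) : g • c = c := by
    have h1 : (Nat.card H : S) * g • c = 1 := by
      have hN : g • (Nat.card H : S) = Nat.card H :=
        map_natCast (MulSemiringAction.toRingHom G S g) _
      rw [← smul_one g, ← hc, smul_mul', hN]
    exact hcard.mul_left_cancel (h1.trans hc.symm)
  let T : S →ₗ[R] S :=
    (LinearMap.mulLeft R c).comp (∑ h : H, DistribSMul.toLinearMap R S (h : G))
  have hT (s : S) : T s = c * ∑ h : H, (h : G) • s := by simp [T, Finset.mul_sum]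
  refine ⟨T.codRestrict _ fun s h hh ↦ ?_, fun x ↦ Subtype.ext ?_⟩
  · rw [hT, smul_mul', hcG, Finset.smul_sum]
    simp_rw [← mul_smul]
    congr 1
    exact Fintype.sum_bijective _ (Group.mulLeft_bijective (⟨h, hh⟩ : H)) _ _ fun _ ↦ rfl
  · change T x = x
    rw [hT]
    have : ∀ h : H, (h : G) • (x : S) = x := fun h ↦ x.2 h h.2
    simp_rw [this]
    rw [Finset.sum_const, Finset.card_univ, ← Nat.card_eq_fintype_card, nsmul_eq_mul, ← mul_assoc,
      mul_comm c, hc, one_mul]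

lemma subsingleton_ext_fixedSubmodule [SMulCommClass G R S] [Finite G] (H : Subgroup G)
    (hcard : IsUnit (Nat.card H : S))
    {L : ModuleCat.{0} R} {i : ℕ} (h : Subsingleton (Ext (ModuleCat.of R S) L i)) :
    Subsingleton (Ext (ModuleCat.of R (fixedSubmodule R S H)) L i) := by
  obtain ⟨π, hπ⟩ := exists_retraction_fixedSubmodule (R := R) H hcard
  refine subsingleton_of_forall_eq 0 fun e ↦ ?_
  have hid : ModuleCat.ofHom (fixedSubmodule R S H).subtype ≫ ModuleCat.ofHom π = 𝟙 _ := by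
    ext x; exact congrArg Subtype.val (hπ x)
  rw [← Ext.mk₀_id_comp e, ← hid, ← Ext.mk₀_comp_mk₀, Ext.comp_assoc_of_second_deg_zero,
    @Subsingleton.elim _ h ((Ext.mk₀ (ModuleCat.ofHom π)).comp e _) 0, Ext.comp_zero]

/-- An element whose conjugates all lie in an ideal `Q` is nilpotent modulo the extension of the
contraction of `Q` to the invariants. -/
lemma mem_radical_map_comap [Finite G] [Algebra.IsInvariant R S G] (Q : Ideal S) {x : S}
    (hx : ∀ g : G, g • x ∈ Q) :
    x ∈ ((Q.comap (algebraMap R S)).map (algebraMap R S)).radical := by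
  have := Fintype.ofFinite G
  let χ := MulSemiringAction.charpoly G x
  have hχQ : χ.map (Ideal.Quotient.mk Q) = Polynomial.X ^ Fintype.card G := by
    simp [χ, MulSemiringAction.charpoly_eq, Polynomial.map_prod,
      fun g : G ↦ Ideal.Quotient.eq_zero_iff_mem.mpr (hx g)]
  refine ⟨Fintype.card G, ?_⟩
  rw [← Ideal.Quotient.eq_zero_iff_mem, map_pow]
  set J := (Q.comap (algebraMap R S)).map (algebraMap R S)
  have hmap : χ.map (Ideal.Quotient.mk J) = Polynomial.X ^ Fintype.card G := by
    ext j
    rw [Polynomial.coeff_map, Polynomial.coeff_X_pow]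
    have hj : χ.coeff j - (if j = Fintype.card G then 1 else 0) ∈ Q := by
      have := congrArg (fun p ↦ p.coeff j) hχQ
      simp only [Polynomial.coeff_map, Polynomial.coeff_X_pow] at this
      rw [← Ideal.Quotient.eq, this]
      split_ifs <;> simp
    obtain ⟨r, hr⟩ := Algebra.IsInvariant.isInvariant (A := R) (G := G)
      (χ.coeff j - (if j = Fintype.card G then 1 else 0)) fun g ↦ by
        rw [smul_sub, MulSemiringAction.smul_coeff_charpoly]
        split_ifs <;> simp [χ]
    have hJ : χ.coeff j - (if j = Fintype.card G then 1 else 0) ∈ J := by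
      rw [← hr]
      exact Ideal.mem_map_of_mem _ (by rwa [Ideal.mem_comap, hr])
    rw [← Ideal.Quotient.eq] at hJ
    rw [hJ]
    split_ifs <;> simp
  have hroot : (χ.map (Ideal.Quotient.mk J)).eval (Ideal.Quotient.mk J x) = 0 := by
    rw [Polynomial.eval_map_apply, MulSemiringAction.eval_charpoly, map_zero]
  simpa [hmap] using hroot

end Retract

section LinearAction

variable {n : ℕ}

/-- The linear polynomial attached to a linear functional. -/
noncomputable def linForm : Module.Dual ℂ (Fin n → ℂ) →ₗ[ℂ] MvPolynomial (Fin n) ℂ where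
  toFun L := ∑ j, C (L (Pi.single j 1)) * X j
  map_add' L L' := by simp [add_mul, Finset.sum_add_distrib]
  map_smul' c L := by simp [Finset.smul_sum, smul_eq_C_mul, mul_assoc]

@[simp]
lemma eval_linForm (L : Module.Dual ℂ (Fin n → ℂ)) (v : Fin n → ℂ) : eval v (linForm L) = L v := by
  conv_rhs => rw [pi_eq_sum_univ' v]
  simp [linForm, mul_comm]

lemma linForm_ne_zero {L : Module.Dual ℂ (Fin n → ℂ)} (hL : L ≠ 0) : linForm L ≠ 0 := fun h ↦
  hL (LinearMap.ext fun v ↦ by rw [← eval_linForm, h, map_zero, LinearMap.zero_apply])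

lemma isHomogeneous_linForm (L : Module.Dual ℂ (Fin n → ℂ)) : (linForm L).IsHomogeneous 1 :=
  IsHomogeneous.sum _ _ _ fun j _ ↦ by
    simpa using (isHomogeneous_C (Fin n) (L (Pi.single j 1))).mul (isHomogeneous_X ℂ j)

lemma irreducible_linForm {L : Module.Dual ℂ (Fin n → ℂ)} (hL : L ≠ 0) :
    Irreducible (linForm L) := by
  refine irreducible_of_totalDegree_eq_one
    ((isHomogeneous_linForm L).totalDegree (linForm_ne_zero hL)) fun x hx ↦ ?_
  obtain ⟨d, hd⟩ := ne_zero_iff.mp (linForm_ne_zero hL)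
  refine isUnit_iff_ne_zero.mpr fun h0 ↦ hd ?_
  simpa [h0] using hx d

/-- The linear forms in a principal prime ideal are all proportional. -/
lemma exists_dual_ker_le_of_mem {P : Ideal (MvPolynomial (Fin n) ℂ)} (hP : P.IsPrime)
    (hpr : Submodule.IsPrincipal P) (D : Set (Module.Dual ℂ (Fin n → ℂ)))
    (hD : ∀ L ∈ D, linForm L ∈ P) :
    ∃ L₀ : Module.Dual ℂ (Fin n → ℂ), ∀ L ∈ D, LinearMap.ker L₀ ≤ LinearMap.ker L := by
  by_cases h : ∀ L ∈ D, L = 0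
  · exact ⟨0, fun L hL ↦ by simp [h L hL]⟩
  push Not at h
  obtain ⟨L₀, hL₀, hne⟩ := h
  refine ⟨L₀, fun L hL v hv ↦ ?_⟩
  obtain ⟨p, rfl⟩ := hpr
  have hp : ¬ IsUnit p := fun hu ↦ hP.ne_top (Ideal.span_singleton_eq_top.mpr hu)
  have hdvd : linForm L₀ ∣ linForm L :=
    (((irreducible_linForm hne).dvd_iff.mp
      (Ideal.mem_span_singleton.mp (hD L₀ hL₀))).resolve_left hp).dvd.trans
      (Ideal.mem_span_singleton.mp (hD L hL))
  obtain ⟨q, hq⟩ := hdvd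
  rw [LinearMap.mem_ker] at hv ⊢
  rw [← eval_linForm, hq, map_mul, eval_linForm, hv, zero_mul]

/-- Linear substitution `P ↦ P ∘ g⁻¹`. -/
noncomputable def linSubst (g : (Fin n → ℂ) ≃ₗ[ℂ] (Fin n → ℂ)) :
    MvPolynomial (Fin n) ℂ →ₐ[ℂ] MvPolynomial (Fin n) ℂ :=
  aeval fun i ↦ linForm ((LinearMap.proj i).comp (g⁻¹ : (Fin n → ℂ) ≃ₗ[ℂ] (Fin n → ℂ)).toLinearMap)

@[simp]
lemma eval_linSubst (g : (Fin n → ℂ) ≃ₗ[ℂ] (Fin n → ℂ)) (P : MvPolynomial (Fin n) ℂ)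
    (v : Fin n → ℂ) : eval v (linSubst g P) = eval (g⁻¹ v) P := by
  induction P using MvPolynomial.induction_on with
  | C a => simp [linSubst]
  | add p q hp hq => simp [hp, hq]
  | mul_X p i hp => simp [hp]; simp [linSubst]

/-- The action of `GL(V)` on polynomial functions on `V`. -/
@[reducible]
noncomputable def linearAction (n : ℕ) :
    MulSemiringAction ((Fin n → ℂ) ≃ₗ[ℂ] (Fin n → ℂ)) (MvPolynomial (Fin n) ℂ) where
  smul g P := linSubst g P
  one_smul P := MvPolynomial.funext fun v ↦ eval_linSubst 1 P v
  mul_smul g h P := MvPolynomial.funext fun v ↦ by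
    change eval v (linSubst (g * h) P) = eval v (linSubst g (linSubst h P))
    rw [eval_linSubst, eval_linSubst, eval_linSubst, mul_inv_rev]
    rfl
  smul_zero g := map_zero (linSubst g)
  smul_add g := map_add (linSubst g)
  smul_one g := map_one (linSubst g)
  smul_mul g := map_mul (linSubst g)

attribute [local instance] linearAction

lemma smul_eq_linSubst (g : (Fin n → ℂ) ≃ₗ[ℂ] (Fin n → ℂ)) (P : MvPolynomial (Fin n) ℂ) :
    g • P = linSubst g P := rfl

lemma smul_linForm (g : (Fin n → ℂ) ≃ₗ[ℂ] (Fin n → ℂ)) (L : Module.Dual ℂ (Fin n → ℂ)) :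
    g • linForm L = linForm (L.comp (g⁻¹ : (Fin n → ℂ) ≃ₗ[ℂ] (Fin n → ℂ)).toLinearMap) :=
  MvPolynomial.funext fun v ↦ by simp [smul_eq_linSubst]

/-- Elements of a finite linear group which agree on `H`-invariants modulo a principal prime differ
by an element of `H`, provided that `H` contains all elements of `G` whose fixed space contains a
hyperplane. -/
lemma inv_mul_mem_of_smul_sub_smul_mem {G : Subgroup ((Fin n → ℂ) ≃ₗ[ℂ] (Fin n → ℂ))} [Finite G]
    {H : Subgroup G}
    (hH : ∀ g : G, (∃ L : Module.Dual ℂ (Fin n → ℂ), ∀ v, L v = 0 → g.1 v = v) → g ∈ H)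
    {P : Ideal (MvPolynomial (Fin n) ℂ)} (hP : P.IsPrime) (hpr : Submodule.IsPrincipal P)
    {g₁ g₂ : G} (h : ∀ s ∈ fixedSubmonoid (MvPolynomial (Fin n) ℂ) H, g₁ • s - g₂ • s ∈ P) :
    g₁⁻¹ * g₂ ∈ H := by
  let δ (u : H) : Module.Dual ℂ (Fin n → ℂ) →ₗ[ℂ] Module.Dual ℂ (Fin n → ℂ) :=
    LinearMap.lcomp ℂ ℂ ((g₁⁻¹ : G).1.toLinearMap - ((g₂ * u)⁻¹ : G).1.toLinearMap)
  have hδ (u : H) (L : Module.Dual ℂ (Fin n → ℂ)) :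
      linForm (δ u L) = g₁ • linForm L - (g₂ * u) • linForm L := by
    rw [Subgroup.smul_def, Subgroup.smul_def, smul_linForm, smul_linForm, ← map_sub]
    congr 1
    ext v
    simp [δ]
  let W (u : H) : Submodule ℂ (Module.Dual ℂ (Fin n → ℂ)) :=
    (P.restrictScalars ℂ).comap (linForm.comp (δ u))
  obtain ⟨u, hu⟩ : ∃ u, W u = ⊤ := by
    refine Subspace.exists_eq_top_of_iUnion_eq_univ (Set.eq_univ_of_forall fun L ↦ ?_)
    obtain ⟨u, huH, hu⟩ := exists_smul_sub_smul_mem h (linForm L)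
    refine Set.mem_iUnion.mpr ⟨⟨u, huH⟩, ?_⟩
    change linForm (δ ⟨u, huH⟩ L) ∈ P
    rwa [hδ]
  obtain ⟨L₀, hL₀⟩ := exists_dual_ker_le_of_mem hP hpr (Set.range (δ u)) (by
    rintro _ ⟨L, rfl⟩
    have : L ∈ W u := hu ▸ Submodule.mem_top
    exact this)
  have hfix : ∀ v, L₀ v = 0 → (g₁⁻¹ : G).1 v = ((g₂ * u)⁻¹ : G).1 v := by
    intro v hv
    ext i
    have := hL₀ _ ⟨LinearMap.proj i, rfl⟩ hv
    simpa [δ, sub_eq_zero] using this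
  have hmem : (g₂ * u)⁻¹ * g₁ ∈ H := by
    refine hH _ ⟨L₀.comp g₁.1.toLinearMap, fun v hv ↦ ?_⟩
    have := hfix (g₁.1 v) hv
    rw [Subgroup.coe_mul, LinearEquiv.mul_apply, ← this]
    simp
  have := H.inv_mem (H.mul_mem u.2 hmem)
  simpa [mul_assoc] using this

end LinearAction

section Main

attribute [local instance] linearAction

variable {n : ℕ}

lemma constantCoeff_eq_zero_of_isHomogeneous {σ : Type*} {p : MvPolynomial σ ℂ} {d : ℕ}
    (hp : p.IsHomogeneous d) (htr : Transcendental ℂ p) : constantCoeff p = 0 := by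
  by_contra h
  have hd : d = 0 := by simpa [eq_comm] using hp h
  subst hd
  rw [totalDegree_eq_zero_iff_eq_C.mp ((totalDegree_zero_iff_isHomogeneous _).mpr hp)] at htr
  exact htr (isAlgebraic_algebraMap _)

lemma constantCoeff_aeval {σ τ : Type*} {f : σ → MvPolynomial τ ℂ}
    (hf : ∀ i, constantCoeff (f i) = 0) (r : MvPolynomial σ ℂ) :
    constantCoeff (aeval f r) = constantCoeff r := by
  induction r using MvPolynomial.induction_on with
  | C a => simp
  | add p q hp hq => rw [map_add, map_add, map_add, hp, hq]
  | mul_X p i _ => simp [hf]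

lemma constantCoeff_linSubst (g : (Fin n → ℂ) ≃ₗ[ℂ] (Fin n → ℂ)) (P : MvPolynomial (Fin n) ℂ) :
    constantCoeff (linSubst g P) = constantCoeff P := by
  have h := eval_linSubst g P 0
  rw [map_zero] at h
  simpa only [MvPolynomial.eval_zero] using h

lemma smul_eq_self_iff (g : (Fin n → ℂ) ≃ₗ[ℂ] (Fin n → ℂ)) (P : MvPolynomial (Fin n) ℂ) :
    g • P = P ↔ ∀ v, eval (g v) P = eval v P := by
  rw [smul_eq_linSubst, MvPolynomial.funext_iff]
  refine ⟨fun h v ↦ ?_, fun h v ↦ ?_⟩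
  · rw [← h (g v), eval_linSubst]
    exact congrArg (eval · P) (g.symm_apply_apply v)
  · rw [eval_linSubst, ← h (g⁻¹ v)]
    exact congrArg (eval · P) (g.apply_symm_apply v)

/-- If the invariants of a finite linear group `G` form a graded polynomial algebra, then `G` is
its only subgroup containing all elements of `G` whose fixed space contains a hyperplane. -/
theorem eq_top_of_invariants_polynomial {G : Subgroup ((Fin n → ℂ) ≃ₗ[ℂ] (Fin n → ℂ))} [Finite G]
    {m : ℕ} {f : Fin m → MvPolynomial (Fin n) ℂ}
    (hinv : ∀ i, ∀ g ∈ G, ∀ v : Fin n → ℂ, eval (g v) (f i) = eval v (f i))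
    (hhom : ∀ i, ∃ d : ℕ, (f i).IsHomogeneous d) (hind : AlgebraicIndependent ℂ f)
    (hgen : ∀ P : MvPolynomial (Fin n) ℂ,
      (∀ g ∈ G, ∀ v : Fin n → ℂ, eval (g v) P = eval v P) → P ∈ Algebra.adjoin ℂ (Set.range f))
    {H : Subgroup G}
    (hH : ∀ g : G, (∃ L : Module.Dual ℂ (Fin n → ℂ), ∀ v, L v = 0 → g.1 v = v) → g ∈ H) :
    H = ⊤ := by
  let R := MvPolynomial (Fin m) ℂ
  let S := MvPolynomial (Fin n) ℂ
  let : Algebra R S := (aeval f).toAlgebra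
  have hf0 (i : Fin m) : constantCoeff (f i) = 0 := by
    obtain ⟨d, hd⟩ := hhom i
    exact constantCoeff_eq_zero_of_isHomogeneous hd (hind.transcendental i)
  have hcc (r : R) : constantCoeff (algebraMap R S r) = constantCoeff r :=
    constantCoeff_aeval hf0 r
  have hccG (g : G) (s : S) : constantCoeff (g • s) = constantCoeff s :=
    constantCoeff_linSubst g.1 s
  have : IsScalarTower ℂ R S := .of_algebraMap_eq fun c ↦ ((aeval f).commutes c).symm
  have : FaithfulSMul R S := (faithfulSMul_iff_algebraMap_injective R S).mpr hind
  have hfix (g : G) (r : R) : g • algebraMap R S r = algebraMap R S r := by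
    have : (linSubst g.1).comp (aeval f) = aeval f := by
      refine MvPolynomial.algHom_ext fun i ↦ ?_
      rw [AlgHom.comp_apply, aeval_X]
      exact (smul_eq_self_iff g.1 (f i)).mpr (hinv i g.1 g.2)
    exact DFunLike.congr_fun this r
  have : SMulCommClass G R S := ⟨fun g r s ↦ by
    rw [Algebra.smul_def, Algebra.smul_def, smul_mul', hfix]⟩
  have : Algebra.IsInvariant R S G := ⟨fun s hs ↦ by
    have := hgen s fun g hg ↦ (smul_eq_self_iff g s).mp (hs ⟨g, hg⟩)
    rwa [Algebra.adjoin_range_eq_range_aeval] at this⟩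
  have : Algebra.IsIntegral R S := Algebra.IsInvariant.isIntegral R S G
  have : Algebra.FiniteType R S := .of_restrictScalars_finiteType ℂ R S
  have : Module.Finite R S := Algebra.IsIntegral.finite
  let I : Ideal R := RingHom.ker (constantCoeff (R := ℂ) (σ := Fin m))
  let Q : Ideal S := RingHom.ker (constantCoeff (R := ℂ) (σ := Fin n))
  have : I.IsMaximal := RingHom.ker_isMaximal_of_surjective _ fun c ↦ ⟨C c, constantCoeff_C _ c⟩
  have : Q.IsPrime := RingHom.ker_isPrime _
  have hQI : Q.comap (algebraMap R S) = I := by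
    ext r
    change constantCoeff (algebraMap R S r) = 0 ↔ constantCoeff r = 0
    rw [hcc]
  let L : ModuleCat.{0} R := ModuleCat.of R (R ⧸ I)
  let q : R →ₗ[R] L := I.mkQ
  have hq : Function.Surjective q := I.mkQ_surjective
  have hker (r : R) : q r = 0 ↔ constantCoeff r = 0 :=
    (Submodule.Quotient.mk_eq_zero I).trans RingHom.mem_ker
  have hmn : m ≤ n := by
    have := hind.cardinalMk_le_trdeg
    rw [MvPolynomial.trdeg_of_isDomain] at this
    simpa using this
  have hpd : HasProjectiveDimensionLT L (1 + m) :=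
    hasProjectiveDimensionLT_of_polynomial m R AlgEquiv.refl 1 inferInstance L q hq hker
  have hExtL : Subsingleton (Ext L L (1 + n)) :=
    HasProjectiveDimensionLT.subsingleton L (1 + m) (1 + n) (by lia) L
  have hExtS : Subsingleton (Ext (ModuleCat.of R S) L 1) := by
    refine subsingleton_ext_of_polynomial (I := I) (fun r hr l ↦ ?_) n S AlgEquiv.refl (fun j ↦ ?_)
      1 q hq (fun r ↦ (hker r).trans (by rw [← hcc r]; rfl)) hExtL
    · exact smul_quotient_eq_zero hr l
    · rw [← hQI]
      refine mem_radical_map_comap (G := G) Q fun g ↦ ?_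
      rw [RingHom.mem_ker, hccG]
      exact constantCoeff_X _ j
  have hcard : IsUnit (Nat.card H : S) := by
    have : IsUnit (Nat.card H : ℂ) := by simp [Nat.card_pos.ne']
    simpa using this.map (algebraMap ℂ S)
  obtain ⟨k, b, hb, r, hrI, hr⟩ := exists_linearIndependent_of_subsingleton_ext I
    (fixedSubmodule R S H) (subsingleton_ext_fixedSubmodule H hcard hExtS)
  refine eq_top_of_free_of_unramified (R := R) (S := S) (b := fun i ↦ (b i : S)) (r := r)
    (fun i ↦ (b i).2) (hb.map' (fixedSubmodule R S H).subtype (Submodule.ker_subtype _))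
    (fun s hs ↦ ?_) Q ?_ (fun g s ↦ ?_) fun P hP hpr g₁ g₂ h ↦
      inv_mul_mem_of_smul_sub_smul_mem hH hP hpr h
  · have := Submodule.mem_map_of_mem (f := (fixedSubmodule R S H).subtype) (hr ⟨s, hs⟩)
    rw [Submodule.map_span, ← Set.range_comp] at this
    exact this
  · rwa [← Ideal.mem_comap, hQI]
  · rw [RingHom.mem_ker, map_sub, hccG, sub_self]

/-- An endomorphism fixing a hyperplane pointwise is the identity or has fixed space of
codimension one. -/
lemma eq_one_or_finrank_ker_sub_id {K V : Type*} [Field K] [AddCommGroup V] [Module K V]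
    [FiniteDimensional K V] {g : V ≃ₗ[K] V} {L : Module.Dual K V}
    (hg : ∀ v, L v = 0 → g v = v) :
    g = 1 ∨ Module.finrank K V -
      Module.finrank K (LinearMap.ker ((g : V →ₗ[K] V) - LinearMap.id)) = 1 := by
  set F := LinearMap.ker ((g : V →ₗ[K] V) - LinearMap.id)
  have hle : LinearMap.ker L ≤ F := fun v hv ↦ by simpa [F, sub_eq_zero] using hg v hv
  have h1 := Submodule.finrank_mono hle
  have h2 := L.finrank_range_add_finrank_ker
  have h3 : Module.finrank K (LinearMap.range L) ≤ 1 := by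
    simpa using Submodule.finrank_le (LinearMap.range L)
  by_cases hF : F = ⊤
  · refine Or.inl (LinearEquiv.ext fun v ↦ ?_)
    have : v ∈ F := hF ▸ Submodule.mem_top
    simpa [F, sub_eq_zero] using this
  · have := Submodule.finrank_lt hF
    right
    lia

end Main

end

open MvPolynomial in
/-- Chevalley–Shephard–Todd (one direction): if the algebra of `G`-invariant
polynomial functions on `V = ℂⁿ` is a graded polynomial algebra — i.e. it is
generated by algebraically independent homogeneous invariant polynomials —
then the finite group `G ⊆ GL(V)` is generated by complex reflections. -/
theorem generated_by_complex_reflections_of_invariants_polynomial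
    (n : ℕ) (G : Subgroup ((Fin n → ℂ) ≃ₗ[ℂ] (Fin n → ℂ))) (hGfin : Finite G)
    (hpoly : ∃ (m : ℕ) (f : Fin m → MvPolynomial (Fin n) ℂ),
      (∀ i, ∀ g ∈ G, ∀ v : Fin n → ℂ, eval (g v) (f i) = eval v (f i)) ∧
      (∀ i, ∃ d : ℕ, (f i).IsHomogeneous d) ∧
      AlgebraicIndependent ℂ f ∧
      (∀ P : MvPolynomial (Fin n) ℂ,
        (∀ g ∈ G, ∀ v : Fin n → ℂ, eval (g v) P = eval v P) →
          P ∈ Algebra.adjoin ℂ (Set.range f))) :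
    Subgroup.closure {g : (Fin n → ℂ) ≃ₗ[ℂ] (Fin n → ℂ) | g ∈ G ∧ IsOfFinOrder g ∧
        Module.finrank ℂ (Fin n → ℂ) -
          Module.finrank ℂ (LinearMap.ker
            ((g : (Fin n → ℂ) →ₗ[ℂ] (Fin n → ℂ)) - LinearMap.id)) = 1} = G := by
  obtain ⟨m, f, hinv, hhom, hind, hgen⟩ := hpoly
  refine le_antisymm ((Subgroup.closure_le G).mpr fun g hg ↦ hg.1) ?_
  rw [← Subgroup.subgroupOf_eq_top]
  refine eq_top_of_invariants_polynomial hinv hhom hind hgen fun g ⟨L, hL⟩ ↦ ?_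
  rw [Subgroup.mem_subgroupOf]
  rcases eq_one_or_finrank_ker_sub_id hL with h | h
  · rw [h]
    exact one_mem _
  · exact Subgroup.subset_closure ⟨g.2, G.subtype.isOfFinOrder (isOfFinOrder_of_finite g), h⟩
end

section
/- Let A be an n×n complex matrix which is skew-symmetric (Aᵀ = −A). Then there exist a unitary matrix U and nonnegative real numbers λ₁, …, λ_k (with 2k ≤ n) such that Uᵀ A U is block-diagonal, consisting of the 2×2 blocks [[0, λ_i], [−λ_i, 0]] for i = 1, …, k followed by a zero block. Equivalently: every alternating bilinear form Θ on a finite-dimensional complex Hermitian inner product space L can be written as Θ = Σ_i λ_i z_{2i−1} ∧ z_{2i}, where z₁, …, z_n is the dual basis of an orthonormal basis of L and the λ_i are nonnegative reals. -/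
open Matrix

open scoped InnerProductSpace ComplexConjugate

/-- A linear functional that attains its norm at a unit vector vanishes on the orthogonal complement
of that vector. -/
lemma LinearMap.apply_eq_zero_of_norm_attained {E : Type*} [NormedAddCommGroup E]
    [InnerProductSpace ℂ E] [FiniteDimensional ℂ E] (f : E →ₗ[ℂ] ℂ) {u : E} (hu : ‖u‖ = 1)
    (hf : ∀ x, ‖f x‖ ≤ ‖f u‖ * ‖x‖) {w : E} (hw : ⟪u, w⟫_ℂ = 0) : f w = 0 := by
  have : CompleteSpace E := FiniteDimensional.complete ℂ E
  set a := (InnerProductSpace.toDual ℂ E).symm (LinearMap.toContinuousLinearMap f)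
  have ha : ∀ x, ⟪a, x⟫_ℂ = f x := fun x => by
    simp [a, InnerProductSpace.toDual_symm_apply]
  have hle : ‖a‖ ≤ ‖f u‖ := by
    rcases eq_or_ne a 0 with h0 | h0
    · simp [h0]
    · have h := hf a
      rw [← ha a, inner_self_eq_norm_sq_to_K] at h
      have hpos : 0 < ‖a‖ := norm_pos_iff.2 h0
      simp only [Complex.coe_algebraMap, norm_pow, Complex.norm_real, norm_norm] at h
      nlinarith
  have heq : ‖⟪u, a⟫_ℂ‖ = ‖u‖ * ‖a‖ := by
    refine le_antisymm (norm_inner_le_norm _ _) ?_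
    rw [hu, one_mul, norm_inner_symm, ha]
    exact hle
  have hu0 : u ≠ 0 := by
    rintro rfl
    simp at hu
  rcases eq_or_ne a 0 with h0 | h0
  · rw [← ha, h0, inner_zero_left]
  · obtain ⟨r, -, hr⟩ := (norm_inner_eq_norm_iff hu0 h0).1 heq
    rw [← ha, hr, inner_smul_left, hw, mul_zero]

/-- A bilinear form on a nontrivial finite-dimensional inner product space attains its norm at a pair
of unit vectors. -/
lemma LinearMap.exists_norm_apply_le {E : Type*} [NormedAddCommGroup E]
    [InnerProductSpace ℂ E] [FiniteDimensional ℂ E] [Nontrivial E] (Θ : E →ₗ[ℂ] E →ₗ[ℂ] ℂ) :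
    ∃ u v : E, ‖u‖ = 1 ∧ ‖v‖ = 1 ∧ ∀ x y, ‖Θ x y‖ ≤ ‖Θ u v‖ * ‖x‖ * ‖y‖ := by
  have : ProperSpace E := FiniteDimensional.proper ℂ E
  let Φ : E →L[ℂ] E →L[ℂ] ℂ := LinearMap.toContinuousLinearMap
    ((LinearMap.toContinuousLinearMap (𝕜 := ℂ) (E := E) (F' := ℂ)).toLinearMap ∘ₗ Θ)
  have hΦ : ∀ x y, Φ x y = Θ x y := fun x y => rfl
  have hcont : Continuous fun p : E × E => ‖Θ p.1 p.2‖ := by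
    simp only [← hΦ]
    fun_prop
  obtain ⟨e, he⟩ := exists_norm_eq E zero_le_one
  obtain ⟨⟨u, v⟩, ⟨hu, hv⟩, hmax⟩ :=
    ((isCompact_sphere (0 : E) 1).prod (isCompact_sphere (0 : E) 1)).exists_isMaxOn
      ⟨(e, e), by simp [he]⟩ hcont.continuousOn
  refine ⟨u, v, by simpa using hu, by simpa using hv, fun x y => ?_⟩
  rcases eq_or_ne x 0 with rfl | hx
  · simp
  rcases eq_or_ne y 0 with rfl | hy
  · simp
  have hx' : 0 < ‖x‖ := norm_pos_iff.2 hx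
  have hy' : 0 < ‖y‖ := norm_pos_iff.2 hy
  have h : ‖Θ ((‖x‖⁻¹ : ℂ) • x) ((‖y‖⁻¹ : ℂ) • y)‖ ≤ ‖Θ u v‖ :=
    hmax (a := ((‖x‖⁻¹ : ℂ) • x, (‖y‖⁻¹ : ℂ) • y)) (by simp [norm_smul, hx, hy])
  simp only [map_smul, LinearMap.smul_apply, norm_smul, norm_inv, Complex.norm_real,
    norm_norm] at h
  calc ‖Θ x y‖ = (‖y‖⁻¹ * (‖x‖⁻¹ * ‖Θ x y‖)) * ‖x‖ * ‖y‖ := by field_simp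
    _ ≤ ‖Θ u v‖ * ‖x‖ * ‖y‖ := by
      gcongr

/-- A nonzero alternating form splits off an orthonormal pair `u, v` on which it is a positive
multiple of the standard form and whose orthogonal complement is also `Θ`-orthogonal to it. -/
lemma LinearMap.IsAlt.exists_orthonormal_pair {E : Type*} [NormedAddCommGroup E]
    [InnerProductSpace ℂ E] [FiniteDimensional ℂ E] {Θ : E →ₗ[ℂ] E →ₗ[ℂ] ℂ} (hΘ : Θ.IsAlt)
    (h0 : Θ ≠ 0) :
    ∃ (u v : E) (r : ℝ), 0 ≤ r ∧ Orthonormal ℂ ![u, v] ∧ Θ u v = r ∧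
      ∀ w, ⟪u, w⟫_ℂ = 0 → ⟪v, w⟫_ℂ = 0 → Θ u w = 0 ∧ Θ v w = 0 := by
  have : Nontrivial E := by
    by_contra h
    rw [not_nontrivial_iff_subsingleton] at h
    exact h0 (Subsingleton.elim _ _)
  obtain ⟨u, v, hu, hv, hle⟩ := Θ.exists_norm_apply_le
  have hpos : Θ u v ≠ 0 := by
    intro h
    refine h0 (LinearMap.ext fun x => LinearMap.ext fun y => ?_)
    simpa [h] using hle x y
  have hneg : ∀ x y, Θ x y = -Θ y x := fun x y => (hΘ.neg y x).symm
  have huw : ∀ w, ⟪v, w⟫_ℂ = 0 → Θ u w = 0 := fun w hw =>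
    (Θ u).apply_eq_zero_of_norm_attained hv (fun x => by simpa [hu] using hle u x) hw
  have hvw : ∀ w, ⟪u, w⟫_ℂ = 0 → Θ v w = 0 := fun w hw =>
    (Θ v).apply_eq_zero_of_norm_attained hu
      (fun x => by simpa [hv, hneg v] using hle x v) hw
  have hvu : ⟪v, u⟫_ℂ = 0 := by
    have h : Θ u (u - ⟪v, u⟫_ℂ • v) = 0 := huw _ (by
      rw [inner_sub_right, inner_smul_right, inner_self_eq_norm_sq_to_K, hv]
      simp)
    rw [map_sub, map_smul, hΘ u, zero_sub, neg_eq_zero, smul_eq_mul] at h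
    exact (mul_eq_zero.1 h).resolve_right hpos
  have hpos' : (‖Θ u v‖ : ℂ) ≠ 0 := by simpa using hpos
  set c : ℂ := conj (Θ u v) / ‖Θ u v‖ with hc
  have hc1 : ‖c‖ = 1 := by
    rw [hc, norm_div, RCLike.norm_conj, Complex.norm_real, norm_norm,
      div_self (norm_ne_zero_iff.2 hpos)]
  have hc0 : c ≠ 0 := by
    rintro h
    simp [h] at hc1
  refine ⟨u, c • v, ‖Θ u v‖, norm_nonneg _, ?_, ?_, fun w hw hw' => ?_⟩
  · rw [orthonormal_vecCons_iff]
    refine ⟨hu, fun i => ?_, ?_⟩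
    · simp [inner_smul_right, inner_eq_zero_symm.1 hvu]
    · simp [norm_smul, hc1, hv]
  · rw [map_smul, smul_eq_mul, hc, div_mul_eq_mul_div, mul_comm, Complex.mul_conj,
      Complex.normSq_eq_norm_sq, div_eq_iff hpos']
    push_cast
    ring
  · have hvw' : ⟪v, w⟫_ℂ = 0 := by simpa [inner_smul_left, hc0] using hw'
    exact ⟨huw w hvw', by simp [hvw w hw]⟩

/-- The `(i, j)` entry of the block-diagonal matrix with blocks `[[0, lam l], [-lam l, 0]]`. -/
noncomputable def skewNormalForm (lam : ℕ → ℝ) (i j : ℕ) : ℂ :=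
  if i + 1 = j ∧ i % 2 = 0 then (lam (i / 2) : ℂ)
  else if j + 1 = i ∧ j % 2 = 0 then -(lam (j / 2) : ℂ)
  else 0

/-- Every alternating form on a finite-dimensional complex inner product space is in normal form with
respect to some orthonormal family of full size. -/
lemma LinearMap.IsAlt.exists_orthonormal_normalForm (n : ℕ) :
    ∀ {E : Type*} [NormedAddCommGroup E] [InnerProductSpace ℂ E] [FiniteDimensional ℂ E]
      {Θ : E →ₗ[ℂ] E →ₗ[ℂ] ℂ}, Θ.IsAlt → Module.finrank ℂ E = n →
    ∃ b : Fin n → E, Orthonormal ℂ b ∧ ∃ (k : ℕ) (lam : ℕ → ℝ),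
      2 * k ≤ n ∧ (∀ i, 0 ≤ lam i) ∧ (∀ i, k ≤ i → lam i = 0) ∧
      ∀ i j, Θ (b i) (b j) = skewNormalForm lam i j := by
  induction n using Nat.strong_induction_on with
  | _ n ih =>
    intro E _ _ _ Θ hΘ hn
    rcases eq_or_ne Θ 0 with rfl | h0
    · subst hn
      exact ⟨stdOrthonormalBasis ℂ E, (stdOrthonormalBasis ℂ E).orthonormal, 0, 0, by simp,
        by simp, by simp, by simp [skewNormalForm]⟩
    obtain ⟨u, v, r, hr, huv, hruv, hperp⟩ := hΘ.exists_orthonormal_pair h0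
    set S : Submodule ℂ E := Submodule.span ℂ (Set.range ![u, v])
    have hS : Module.finrank ℂ S = 2 := by
      simpa using finrank_span_eq_card huv.linearIndependent
    have hadd := S.finrank_add_finrank_orthogonal
    obtain ⟨m, rfl⟩ : ∃ m, n = m + 2 := ⟨Module.finrank ℂ Sᗮ, by omega⟩
    obtain ⟨b, hb, k, lam, hk, hlam, hlam0, hform⟩ :=
      ih m (by omega) (E := Sᗮ) (Θ := Θ.domRestrict₁₂ Sᗮ Sᗮ) (fun x => hΘ x) (by omega)
    have hub : ∀ i, ⟪u, (b i : E)⟫_ℂ = 0 := fun i =>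
      Submodule.inner_right_of_mem_orthogonal (K := S) (Submodule.subset_span ⟨0, rfl⟩) (b i).2
    have hvb : ∀ i, ⟪v, (b i : E)⟫_ℂ = 0 := fun i =>
      Submodule.inner_right_of_mem_orthogonal (K := S) (Submodule.subset_span ⟨1, rfl⟩) (b i).2
    have hΘub : ∀ i, Θ u (b i) = 0 := fun i => (hperp _ (hub i) (hvb i)).1
    have hΘvb : ∀ i, Θ v (b i) = 0 := fun i => (hperp _ (hub i) (hvb i)).2
    have hΘbu : ∀ i, Θ (b i) u = 0 := fun i => by rw [← hΘ.neg, hΘub, neg_zero]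
    have hΘbv : ∀ i, Θ (b i) v = 0 := fun i => by rw [← hΘ.neg, hΘvb, neg_zero]
    have hΘvu : Θ v u = -r := by rw [← hΘ.neg, hruv]
    have hform' : ∀ i j, Θ (b i) (b j) = skewNormalForm lam i j := hform
    refine ⟨Matrix.vecCons u (Matrix.vecCons v fun i => (b i : E)), ?_, k + 1,
      fun i => Nat.casesOn i r lam, by omega, ?_, ?_, ?_⟩
    · simp only [orthonormal_vecCons_iff] at huv ⊢
      refine ⟨huv.1, fun i => ?_, huv.2.2.1, hvb, hb.comp_linearIsometry Sᗮ.subtypeₗᵢ⟩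
      refine Fin.cases ?_ (fun i => ?_) i
      · simpa using huv.2.1 0
      · simpa using hub i
    · rintro (_ | i)
      exacts [hr, hlam i]
    · rintro (_ | i) hi
      · omega
      · exact hlam0 i (by omega)
    · intro i j
      refine Fin.cases ?_ (fun i => Fin.cases ?_ (fun i => ?_) i) i <;>
      refine Fin.cases ?_ (fun j => Fin.cases ?_ (fun j => ?_) j) j <;>
      simp [skewNormalForm, hΘ u, hΘ v, hruv, hΘvu, hΘub, hΘvb, hΘbu, hΘbv, hform', add_assoc]

/-- Normal form for complex skew-symmetric matrices (Youla/Hua): if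
`Aᵀ = −A`, there are a unitary matrix `U`, a natural number `k` with
`2k ≤ n`, and nonnegative reals `λ₀, …, λ_{k−1}` such that `Uᵀ A U` is
block-diagonal with `2×2` blocks `[[0, λᵢ], [−λᵢ, 0]]` followed by a zero
block.  (The entry in position `(i, j)` is `λ_{i/2}` if `j = i + 1` with `i`
even, `−λ_{j/2}` if `i = j + 1` with `j` even, and `0` otherwise.) -/
theorem skew_symmetric_unitary_normal_form
    (n : ℕ) (A : Matrix (Fin n) (Fin n) ℂ) (hA : Aᵀ = -A) :
    ∃ U ∈ Matrix.unitaryGroup (Fin n) ℂ, ∃ (k : ℕ) (lam : ℕ → ℝ),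
      2 * k ≤ n ∧ (∀ i, 0 ≤ lam i) ∧ (∀ i, k ≤ i → lam i = 0) ∧
      Uᵀ * A * U = Matrix.of (fun i j : Fin n =>
        if i.1 + 1 = j.1 ∧ i.1 % 2 = 0 then (lam (i.1 / 2) : ℂ)
        else if j.1 + 1 = i.1 ∧ j.1 % 2 = 0 then -(lam (j.1 / 2) : ℂ)
        else 0) := by
  have hΘ : (Matrix.toLinearMap₂' ℂ A).IsAlt := fun x => by
    have h : x ⬝ᵥ A *ᵥ x = -(x ⬝ᵥ A *ᵥ x) := by
      conv_lhs => rw [dotProduct_comm, ← vecMul_transpose, ← dotProduct_mulVec, hA, neg_mulVec,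
        dotProduct_neg]
    rw [Matrix.toLinearMap₂'_apply']
    exact self_eq_neg.1 h
  let e := (WithLp.linearEquiv 2 ℂ (Fin n → ℂ)).toLinearMap
  obtain ⟨b, hb, k, lam, hk, hlam, hlam0, hform⟩ :=
    LinearMap.IsAlt.exists_orthonormal_normalForm n (E := EuclideanSpace ℂ (Fin n))
      (Θ := (Matrix.toLinearMap₂' ℂ A).compl₁₂ e e) (fun x => hΘ (e x)) (by simp)
  refine ⟨Matrix.of fun i j => b j i, ?_, k, lam, hk, hlam, hlam0, ?_⟩
  · rw [Matrix.mem_unitaryGroup_iff']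
    ext i j
    have h := orthonormal_iff_ite.1 hb i j
    rw [PiLp.inner_apply] at h
    simpa [Matrix.mul_apply, Matrix.one_apply, mul_comm, star_eq_conjTranspose] using h
  · ext i j
    have h := hform i j
    rw [LinearMap.compl₁₂_apply, Matrix.toLinearMap₂'_apply', dotProduct_mulVec] at h
    exact h
end
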